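/- Let G be a connected finite simple graph on n vertices, v a vertex of G, and β := β(G). Then f_v'(β) ≤ n/β^{dia(G)}; equivalently, −I'(G, β) ≤ n·I(G∖v, β)/β^{dia(G)}. -/

import Mathlib

open Polynomial

open scoped Classical in
/-- `indPolyOn G A` is the independence polynomial (over `ℝ`) of the subgraph of `G`
induced on the vertex set `A`: the sum of `(-1)^|s| • X^|s|` over all independent
sets `s ⊆ A` of `G`.  Equivalently it is `∑ k (-1)^k a_k z^k` where `a_k` is the
number of independent sets of size `k` of the induced subgraph `G[A]`. -/
noncomputable def indPolyOn {V : Type*} [Fintype V] (G : SimpleGraph V) (A : Set V) :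
    Polynomial ℝ :=
  ∑ s ∈ Finset.univ.filter
      (fun s : Finset V => ↑s ⊆ A ∧ ∀ u ∈ s, ∀ v ∈ s, ¬ G.Adj u v),
    ((-1 : ℝ) ^ s.card) • (X : Polynomial ℝ) ^ s.card

/-- The independence polynomial `I(G,z)` of `G`. -/
noncomputable def indPoly {V : Type*} [Fintype V] (G : SimpleGraph V) : Polynomial ℝ :=
  indPolyOn G Set.univ

/-!
For a vertex `u` let `y u` be the value at `z` of the independence polynomial of `G ∖ N[u]`, so that
`∑ u, y u = -I'(G, z)`. As long as no induced subgraph has a negative independence polynomial at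
`z`, deleting vertices can only increase the value at `z`. Deleting the vertices of `N[w]` from `G`
one by one then shows `z * ∑ u ∈ N[w], y u ≤ y w`, and iterating this `dia(G)` times gives
`z ^ dia(G) * (-I'(G, z)) ≤ y v`. The smallest root `β` of `I(G)` is such a point `z`: the first
nonnegative point at which some induced subgraph acquires a root is, by monotonicity, a root of
`I(G)`. At `β` one has `I(G ∖ v) = β * y v`, and the missing factor `β` is supplied by `1 ≤ n * β`.
-/

section

variable {V : Type*} {G : SimpleGraph V}

/-- The closed neighborhood `N[u]`, reducible so that it unifies with an explicit `insert`. -/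
abbrev closedNeighborSet (G : SimpleGraph V) (u : V) : Set V := insert u (G.neighborSet u)

lemma exists_mem_closedNeighborSet_edist_le {r : ℕ} {w u : V} (h : G.edist w u ≤ (r + 1 : ℕ)) :
    ∃ y ∈ closedNeighborSet G w, G.edist y u ≤ r := by
  obtain ⟨p, hp⟩ := G.exists_walk_of_edist_ne_top (ne_top_of_le_ne_top (ENat.natCast_ne_top _) h)
  cases p with
  | nil => exact ⟨w, Set.mem_insert _ _, by simp⟩
  | @cons _ y _ hadj q =>
    refine ⟨y, Set.mem_insert_of_mem _ hadj, (SimpleGraph.edist_le q).trans ?_⟩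
    rw [← hp, SimpleGraph.Walk.length_cons] at h
    exact_mod_cast Nat.le_of_succ_le_succ (Nat.cast_le.mp h)

variable [Fintype V]

open scoped Classical in
lemma sum_edist_le_succ_le {R : Type*} [AddCommMonoid R] [PartialOrder R] [IsOrderedAddMonoid R]
    {x : V → R} (hx : ∀ u, 0 ≤ x u) (r : ℕ) (w : V) :
    ∑ u with G.edist w u ≤ (r + 1 : ℕ), x u ≤
      ∑ y with y ∈ closedNeighborSet G w, ∑ u with G.edist y u ≤ r, x u := by
  simp_rw [Finset.sum_filter (fun u ↦ G.edist _ u ≤ _)]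
  rw [Finset.sum_comm]
  refine Finset.sum_le_sum fun u _ ↦ ?_
  have hterm (y : V) : 0 ≤ if G.edist y u ≤ r then x u else 0 := by
    split_ifs <;> simp [hx]
  split_ifs with hu
  · obtain ⟨y, hy, hyu⟩ := exists_mem_closedNeighborSet_edist_le hu
    calc x u = if G.edist y u ≤ r then x u else 0 := (if_pos hyu).symm
      _ ≤ _ := Finset.single_le_sum (f := fun y ↦ if G.edist y u ≤ r then x u else 0)
          (fun y _ ↦ hterm y) (by simpa using hy)
  · exact Finset.sum_nonneg fun y _ ↦ hterm y

open scoped Classical in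
lemma pow_mul_sum_edist_le {R : Type*} [CommSemiring R] [PartialOrder R] [IsOrderedRing R]
    {c : R} (hc : 0 ≤ c) {x : V → R} (hx : ∀ u, 0 ≤ x u)
    (h : ∀ w, c * ∑ y with y ∈ closedNeighborSet G w, x y ≤ x w) (r : ℕ) (w : V) :
    c ^ r * ∑ u with G.edist w u ≤ r, x u ≤ x w := by
  induction r generalizing w with
  | zero => simp [Finset.filter_eq]
  | succ r ih =>
    calc c ^ (r + 1) * ∑ u with G.edist w u ≤ (r + 1 : ℕ), x u
        ≤ c ^ (r + 1) * ∑ y with y ∈ closedNeighborSet G w, ∑ u with G.edist y u ≤ r, x u := by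
          gcongr; exact sum_edist_le_succ_le hx r w
      _ = c * ∑ y with y ∈ closedNeighborSet G w, c ^ r * ∑ u with G.edist y u ≤ r, x u := by
          rw [pow_succ', mul_assoc, Finset.mul_sum]
      _ ≤ c * ∑ y with y ∈ closedNeighborSet G w, x y := by gcongr; exact ih _
      _ ≤ x w := h w

open scoped Classical in
/-- The independent sets of `G` contained in `A`, over which `indPolyOn G A` is a sum. -/
noncomputable def indepFinsetsIn (G : SimpleGraph V) (A : Set V) : Finset (Finset V) :=
  {s | ↑s ⊆ A ∧ G.IsIndepSet s}

lemma mem_indepFinsetsIn {A : Set V} {s : Finset V} :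
    s ∈ indepFinsetsIn G A ↔ ↑s ⊆ A ∧ G.IsIndepSet s := by
  simp [indepFinsetsIn]

lemma indPolyOn_eq_sum (G : SimpleGraph V) (A : Set V) :
    indPolyOn G A = ∑ s ∈ indepFinsetsIn G A, ((-1 : ℝ) ^ s.card) • (X : ℝ[X]) ^ s.card := by
  refine Finset.sum_congr (Finset.ext fun s ↦ ?_) fun _ _ ↦ rfl
  simp only [Finset.mem_filter_univ, mem_indepFinsetsIn]
  refine and_congr_right fun _ ↦ ⟨fun h u hu v hv _ ↦ h u hu v hv, fun h u hu v hv huv ↦ ?_⟩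
  exact h hu hv huv.ne huv

open scoped Classical in
lemma mem_indepFinsetsIn_sdiff_closedNeighborSet {A : Set V} {u : V} (hu : u ∈ A) {t : Finset V} :
    t ∈ indepFinsetsIn G (A \ closedNeighborSet G u) ↔
      u ∉ t ∧ insert u t ∈ indepFinsetsIn G A := by
  simp only [mem_indepFinsetsIn, Finset.coe_insert, Set.insert_subset_iff, hu, true_and,
    ← SimpleGraph.isClique_compl, SimpleGraph.isClique_insert, SimpleGraph.compl_adj,
    Set.subset_sdiff, Set.disjoint_left, Set.mem_insert_iff, Finset.mem_coe,
    SimpleGraph.mem_neighborSet]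
  grind [SimpleGraph.Adj.ne]

open scoped Classical in
lemma sum_indepFinsetsIn_filter_mem {M : Type*} [AddCommMonoid M] {A : Set V} {u : V} (hu : u ∈ A)
    (g : ℕ → M) :
    ∑ s ∈ indepFinsetsIn G A with u ∈ s, g s.card =
      ∑ t ∈ indepFinsetsIn G (A \ closedNeighborSet G u), g (t.card + 1) := by
  refine Finset.sum_nbij' (fun s ↦ s.erase u) (fun t ↦ insert u t) ?_ ?_ ?_ ?_ ?_ <;>
    simp +contextual [mem_indepFinsetsIn_sdiff_closedNeighborSet hu, Finset.card_erase_add_one,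
      -Finset.card_erase_of_mem]

open scoped Classical in
lemma indepFinsetsIn_filter_notMem (A : Set V) (u : V) :
    {s ∈ indepFinsetsIn G A | u ∉ s} = indepFinsetsIn G (A \ {u}) := by
  ext s
  simp only [Finset.mem_filter, mem_indepFinsetsIn, Set.subset_sdiff, Set.disjoint_singleton_right,
    Finset.mem_coe]
  tauto

lemma indPolyOn_eq_sub {A : Set V} {u : V} (hu : u ∈ A) :
    indPolyOn G A = indPolyOn G (A \ {u}) - X * indPolyOn G (A \ closedNeighborSet G u) := by
  classical
  have hmem : ∑ s ∈ indepFinsetsIn G A with u ∈ s, (-1 : ℝ) ^ s.card • (X : ℝ[X]) ^ s.card =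
      -(X * indPolyOn G (A \ closedNeighborSet G u)) := by
    rw [sum_indepFinsetsIn_filter_mem hu fun k ↦ (-1 : ℝ) ^ k • (X : ℝ[X]) ^ k, indPolyOn_eq_sum,
      Finset.mul_sum, ← Finset.sum_neg_distrib]
    simp only [pow_succ', mul_smul, neg_smul, one_smul, mul_smul_comm]
  rw [indPolyOn_eq_sum G A, ← Finset.sum_filter_not_add_sum_filter _ (fun s ↦ u ∈ s), hmem,
    indepFinsetsIn_filter_notMem, ← indPolyOn_eq_sum, sub_eq_add_neg]

lemma eval_indPolyOn_sdiff_singleton {A : Set V} {u : V} (hu : u ∈ A) (z : ℝ) :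
    (indPolyOn G (A \ {u})).eval z =
      (indPolyOn G A).eval z + z * (indPolyOn G (A \ closedNeighborSet G u)).eval z := by
  simp [indPolyOn_eq_sub hu]

@[simp]
lemma indPolyOn_empty : indPolyOn G ∅ = 1 := by
  have : indepFinsetsIn G ∅ = {∅} := by
    ext s
    simp +contextual [mem_indepFinsetsIn, Set.subset_empty_iff]
  simp [indPolyOn_eq_sum, this]

open scoped Classical in
lemma derivative_indPolyOn (G : SimpleGraph V) (A : Set V) :
    derivative (indPolyOn G A) =
      -∑ u with u ∈ A, indPolyOn G (A \ closedNeighborSet G u) := by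
  let term (k : ℕ) : ℝ[X] := (-1 : ℝ) ^ k • X ^ (k - 1)
  have hvertex {u : V} (hu : u ∈ A) : indPolyOn G (A \ closedNeighborSet G u) =
      -∑ s ∈ indepFinsetsIn G A with u ∈ s, term s.card := by
    rw [sum_indepFinsetsIn_filter_mem hu term, indPolyOn_eq_sum, ← Finset.sum_neg_distrib]
    simp [term, pow_succ]
  have hset (s : Finset V) :
      derivative ((-1 : ℝ) ^ s.card • X ^ s.card : ℝ[X]) = ∑ _u ∈ s, term s.card := by
    simp [term, derivative_X_pow, nsmul_eq_mul]
  calc derivative (indPolyOn G A)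
      = ∑ s ∈ indepFinsetsIn G A, ∑ _u ∈ s, term s.card := by
        rw [indPolyOn_eq_sum, derivative_sum, Finset.sum_congr rfl fun s _ ↦ hset s]
    _ = ∑ u with u ∈ A, ∑ s ∈ indepFinsetsIn G A with u ∈ s, term s.card := by
        refine Finset.sum_comm' fun s u ↦ ?_
        simp only [Finset.mem_filter, Finset.mem_univ, true_and, mem_indepFinsetsIn]
        exact ⟨fun ⟨hs, hu⟩ ↦ ⟨⟨hs, hu⟩, hs.1 hu⟩, fun ⟨hs, _⟩ ↦ hs⟩
    _ = -∑ u with u ∈ A, indPolyOn G (A \ closedNeighborSet G u) := by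
        rw [← Finset.sum_neg_distrib]
        exact Finset.sum_congr rfl fun u hu ↦ by
          rw [hvertex (Finset.mem_filter_univ u |>.1 hu), neg_neg]

lemma derivative_indPoly (G : SimpleGraph V) :
    derivative (indPoly G) = -∑ u, indPolyOn G (closedNeighborSet G u)ᶜ := by
  simp [indPoly, derivative_indPolyOn, Set.compl_eq_univ_sdiff]

lemma one_le_eval_indPolyOn_of_nonpos (A : Set V) {z : ℝ} (hz : z ≤ 0) :
    1 ≤ (indPolyOn G A).eval z := by
  have heval : (indPolyOn G A).eval z = ∑ s ∈ indepFinsetsIn G A, (-z) ^ s.card := by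
    simp [indPolyOn_eq_sum, eval_finsetSum, ← mul_pow]
  have hempty : ∅ ∈ indepFinsetsIn G A := by simp [mem_indepFinsetsIn]
  rw [heval]
  simpa using Finset.single_le_sum
    (fun (s : Finset V) _ ↦ pow_nonneg (neg_nonneg.2 hz) s.card) hempty

/-- `z` lies in the closed Shearer region of `G`, all vertices having weight `z`: no induced
subgraph has a negative independence polynomial at `z`. The smallest root of `I(G)` is such a
point, and the recursive inequalities of the proof hold at every such point. -/
structure IsShearerPoint (G : SimpleGraph V) (z : ℝ) : Prop where
  nonneg : 0 ≤ z
  eval_nonneg (A : Set V) : 0 ≤ (indPolyOn G A).eval z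

namespace IsShearerPoint

variable {z : ℝ}

lemma antitone_eval (hz : IsShearerPoint G z) : Antitone fun A ↦ (indPolyOn G A).eval z := by
  classical
  let _ : LocallyFiniteOrder (Set V) := Fintype.toLocallyFiniteOrder
  refine (antitone_iff_forall_covBy _).2 fun A B hAB ↦ ?_
  obtain ⟨u, hu, rfl⟩ := Set.covBy_iff_exists_sdiff_singleton.1 hAB
  rw [eval_indPolyOn_sdiff_singleton hu]
  exact le_add_of_nonneg_right (mul_nonneg hz.nonneg (hz.eval_nonneg _))

lemma eval_add_mul_sum_le (hz : IsShearerPoint G z) {A : Set V} {S : Finset V} (hS : ↑S ⊆ A) :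
    (indPolyOn G A).eval z + z * ∑ u ∈ S, (indPolyOn G (A \ closedNeighborSet G u)).eval z ≤
      (indPolyOn G (A \ S)).eval z := by
  classical
  induction S using Finset.induction_on with
  | empty => simp
  | insert u S hu ih =>
    rw [Finset.coe_insert, Set.insert_subset_iff] at hS
    have hmono : (indPolyOn G (A \ closedNeighborSet G u)).eval z ≤
        (indPolyOn G ((A \ S) \ closedNeighborSet G u)).eval z :=
      hz.antitone_eval (Set.sdiff_subset_sdiff_left Set.sdiff_subset)
    have hdelete := eval_indPolyOn_sdiff_singleton (G := G) (A := A \ S) (u := u) ⟨hS.1, hu⟩ z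
    rw [Set.sdiff_sdiff, Set.union_singleton, ← Finset.coe_insert] at hdelete
    rw [Finset.sum_insert hu, mul_add, hdelete]
    linarith [ih hS.2, mul_le_mul_of_nonneg_left hmono hz.nonneg]

lemma one_sub_ncard_mul_le_eval (hz : IsShearerPoint G z) (A : Set V) :
    1 - A.ncard * z ≤ (indPolyOn G A).eval z := by
  induction A, A.toFinite using Set.Finite.induction_on with
  | empty => simp
  | @insert u A hu _ ih =>
    have hdelete := eval_indPolyOn_sdiff_singleton (G := G) (Set.mem_insert u A) z
    rw [Set.insert_sdiff_self_of_notMem hu] at hdelete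
    have hle_one : (indPolyOn G (insert u A \ closedNeighborSet G u)).eval z ≤ 1 := by
      simpa using hz.antitone_eval (Set.empty_subset (insert u A \ closedNeighborSet G u))
    rw [Set.ncard_insert_of_notMem hu]
    push_cast
    linarith [mul_le_mul_of_nonneg_left hle_one hz.nonneg]

lemma eval_sdiff_closedNeighborSet_eq_zero (hz : IsShearerPoint G z) {A : Set V} {u : V}
    (hA : (indPolyOn G A).eval z = 0) (hu : u ∉ A) :
    (indPolyOn G (A \ closedNeighborSet G u)).eval z = 0 := by
  have hz₀ : z ≠ 0 := by
    rintro rfl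
    linarith [one_le_eval_indPolyOn_of_nonpos (G := G) A le_rfl]
  have hdelete := eval_indPolyOn_sdiff_singleton (G := G) (Set.mem_insert u A) z
  rw [Set.insert_sdiff_self_of_notMem hu, hA,
    Set.insert_sdiff_of_mem _ (Set.mem_insert u _)] at hdelete
  have hprod : z * (indPolyOn G (A \ closedNeighborSet G u)).eval z = 0 := by
    linarith [hz.eval_nonneg (insert u A),
      mul_nonneg hz.nonneg (hz.eval_nonneg (A \ closedNeighborSet G u))]
  exact (mul_eq_zero.1 hprod).resolve_left hz₀

lemma eval_pos_of_ne_univ (hz : IsShearerPoint G z) (hG : G.Preconnected) {B : Set V}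
    (hB : B ≠ Set.univ) : 0 < (indPolyOn G B).eval z := by
  refine (hz.eval_nonneg B).lt_of_ne' fun hB₀ ↦ ?_
  obtain ⟨A, hAB, hA⟩ := exists_minimal_le_of_wellFoundedLT
    (fun A : Set V ↦ (indPolyOn G A).eval z = 0) B hB₀
  have hA_nonempty : A.Nonempty := by
    rw [Set.nonempty_iff_ne_empty]
    rintro rfl
    simpa using hA.prop
  obtain ⟨a, ha⟩ := hA_nonempty
  obtain ⟨b, hb⟩ := (Set.ne_univ_iff_exists_notMem B).1 hB
  obtain ⟨p⟩ := hG a b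
  obtain ⟨d, _, hfst, hsnd⟩ := p.exists_boundary_dart A ha fun h ↦ hb (hAB h)
  have hsmaller := hz.eval_sdiff_closedNeighborSet_eq_zero hA.prop hsnd
  exact (hA.le_of_le hsmaller Set.sdiff_subset hfst).2 (Or.inr d.adj.symm)

lemma mul_sum_closedNeighborSet_le (hz : IsShearerPoint G z) (w : V)
    [DecidablePred (· ∈ closedNeighborSet G w)] :
    z * ∑ u with u ∈ closedNeighborSet G w, (indPolyOn G (closedNeighborSet G u)ᶜ).eval z ≤
      (indPolyOn G (closedNeighborSet G w)ᶜ).eval z := by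
  have h := hz.eval_add_mul_sum_le (A := Set.univ) (S := {u | u ∈ closedNeighborSet G w})
    (Set.subset_univ _)
  simp only [← Set.compl_eq_univ_sdiff, Finset.coe_filter_univ, Set.ofPred_mem_eq] at h
  linarith [hz.eval_nonneg Set.univ]

lemma pow_diam_mul_neg_eval_derivative_le (hz : IsShearerPoint G z) (hG : G.Connected) (v : V) :
    z ^ G.diam * -(derivative (indPoly G)).eval z ≤
      (indPolyOn G (closedNeighborSet G v)ᶜ).eval z := by
  classical
  have := hG.nonempty
  have hball (u : V) : G.edist v u ≤ G.diam := by
    rw [SimpleGraph.diam, ENat.natCast_toNat (SimpleGraph.connected_iff_ediam_ne_top.1 hG)]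
    exact SimpleGraph.edist_le_ediam
  simpa [hball, derivative_indPoly, eval_finsetSum] using
    pow_mul_sum_edist_le hz.nonneg (fun u ↦ hz.eval_nonneg (closedNeighborSet G u)ᶜ)
      (fun w ↦ hz.mul_sum_closedNeighborSet_le w) G.diam v

end IsShearerPoint

lemma isShearerPoint_of_forall_ne_zero {z : ℝ} (hz : 0 ≤ z)
    (h : ∀ A : Set V, ∀ x ∈ Set.Ico 0 z, (indPolyOn G A).eval x ≠ 0) : IsShearerPoint G z := by
  refine ⟨hz, fun A ↦ ?_⟩
  by_contra! hneg
  have hzero : 0 ≤ (indPolyOn G A).eval 0 :=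
    zero_le_one.trans (one_le_eval_indPolyOn_of_nonpos A le_rfl)
  obtain ⟨y, hy, hy₀⟩ :=
    intermediate_value_Icc' hz (indPolyOn G A).continuous.continuousOn ⟨hneg.le, hzero⟩
  exact h A y ⟨hy.1, hy.2.lt_of_ne fun hyz ↦ hneg.ne (hyz ▸ hy₀)⟩ hy₀

lemma exists_isLeast_nonneg_root_induced {β : ℝ} (hβ : 0 ≤ β) (hroot : (indPoly G).eval β = 0) :
    ∃ z, IsLeast {x | 0 ≤ x ∧ ∃ A : Set V, (indPolyOn G A).eval x = 0} z := by
  have hclosed : IsClosed {x | 0 ≤ x ∧ ∃ A : Set V, (indPolyOn G A).eval x = 0} := by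
    simp only [Set.ofPred_and, Set.ofPred_exists]
    exact isClosed_Ici.inter (isClosed_iUnion_of_finite fun A ↦
      isClosed_eq (indPolyOn G A).continuous continuous_const)
  exact ⟨_, hclosed.isLeast_csInf ⟨β, hβ, Set.univ, hroot⟩ ⟨0, fun _ hx ↦ hx.1⟩⟩

lemma pos_of_eval_indPoly_eq_zero {β : ℝ} (hroot : (indPoly G).eval β = 0) : 0 < β := by
  by_contra! hβ
  have := one_le_eval_indPolyOn_of_nonpos (G := G) Set.univ hβ
  rw [indPoly] at hroot
  linarith

lemma isShearerPoint_of_isLeast_root {β : ℝ} (hβ : IsLeast {x | (indPoly G).eval x = 0} β) :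
    IsShearerPoint G β := by
  have hβ_nonneg := (pos_of_eval_indPoly_eq_zero hβ.1).le
  obtain ⟨z, ⟨hz_nonneg, A, hA⟩, hz_min⟩ := exists_isLeast_nonneg_root_induced hβ_nonneg hβ.1
  have hz : IsShearerPoint G z := isShearerPoint_of_forall_ne_zero hz_nonneg
    fun B x hx hB ↦ (hz_min ⟨hx.1, B, hB⟩).not_gt hx.2
  have hroot : (indPoly G).eval z = 0 :=
    le_antisymm ((hz.antitone_eval (Set.subset_univ A)).trans_eq hA) (hz.eval_nonneg _)
  have hzβ : z = β := le_antisymm (hz_min ⟨hβ_nonneg, Set.univ, hβ.1⟩) (hβ.2 hroot)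
  exact hzβ ▸ hz

lemma eval_indPolyOn_compl_singleton (v : V) (z : ℝ) :
    (indPolyOn G {v}ᶜ).eval z =
      (indPoly G).eval z + z * (indPolyOn G (closedNeighborSet G v)ᶜ).eval z := by
  simp only [Set.compl_eq_univ_sdiff, indPoly, eval_indPolyOn_sdiff_singleton (Set.mem_univ v)]

lemma deriv_mul_eval_div_eval_of_root {β : ℝ} {v : V} (hroot : (indPoly G).eval β = 0)
    (hv : (indPolyOn G {v}ᶜ).eval β ≠ 0) :
    deriv (fun x ↦ x * (indPolyOn G (closedNeighborSet G v)ᶜ).eval x /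
        (indPolyOn G {v}ᶜ).eval x) β =
      -(derivative (indPoly G)).eval β / (indPolyOn G {v}ᶜ).eval β := by
  have hnum (x : ℝ) : x * (indPolyOn G (closedNeighborSet G v)ᶜ).eval x =
      (indPolyOn G {v}ᶜ - indPoly G).eval x := by
    rw [eval_sub, eval_indPolyOn_compl_singleton, add_sub_cancel_left]
  simp_rw [hnum]
  rw [(((indPolyOn G {v}ᶜ - indPoly G).hasDerivAt β).fun_div
    ((indPolyOn G {v}ᶜ).hasDerivAt β) hv).deriv]
  simp only [derivative_sub, eval_sub, hroot]
  field_simp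
  ring

lemma neg_eval_derivative_indPoly_le {β : ℝ} (hG : G.Connected) (v : V)
    (hβ : IsShearerPoint G β) (hroot : (indPoly G).eval β = 0) :
    -(derivative (indPoly G)).eval β ≤
      Fintype.card V * (indPolyOn G {v}ᶜ).eval β / β ^ G.diam := by
  have hcard : 1 ≤ Fintype.card V * β := by
    have := hβ.one_sub_ncard_mul_le_eval Set.univ
    rw [← indPoly, hroot, Set.ncard_univ, Nat.card_eq_fintype_card] at this
    linarith
  have hβ_pos := pos_of_eval_indPoly_eq_zero hroot
  rw [le_div_iff₀' (pow_pos hβ_pos _)]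
  calc β ^ G.diam * -(derivative (indPoly G)).eval β
      ≤ (indPolyOn G (closedNeighborSet G v)ᶜ).eval β :=
        hβ.pow_diam_mul_neg_eval_derivative_le hG v
    _ ≤ Fintype.card V * β * (indPolyOn G (closedNeighborSet G v)ᶜ).eval β :=
        le_mul_of_one_le_left (hβ.eval_nonneg _) hcard
    _ = Fintype.card V * (indPolyOn G {v}ᶜ).eval β := by
        rw [eval_indPolyOn_compl_singleton, hroot, zero_add, mul_assoc]

end

/-- For a connected graph `G` on `n` vertices, a vertex `v`, and
`β := β(G)`, one has `f_v'(β) ≤ n/β^{dia(G)}`; equivalently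
`−I'(G,β) ≤ n·I(G∖v,β)/β^{dia(G)}`. -/
theorem deriv_fv_at_beta_upper_bound {V : Type*} [Fintype V]
    (G : SimpleGraph V) (hG : G.Connected) (v : V)
    (β : ℝ) (hroot : (indPoly G).eval β = 0)
    (hmin : ∀ x : ℝ, (indPoly G).eval x = 0 → β ≤ x) :
    deriv (fun x : ℝ =>
        x * (indPolyOn G (insert v (G.neighborSet v))ᶜ).eval x /
          (indPolyOn G {v}ᶜ).eval x) β ≤ (Fintype.card V : ℝ) / β ^ G.diam ∧
    -(derivative (indPoly G)).eval β ≤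
      (Fintype.card V : ℝ) * (indPolyOn G {v}ᶜ).eval β / β ^ G.diam := by
  have hβ : IsShearerPoint G β := isShearerPoint_of_isLeast_root ⟨hroot, fun x hx ↦ hmin x hx⟩
  have hbound := neg_eval_derivative_indPoly_le hG v hβ hroot
  have hpos : 0 < (indPolyOn G {v}ᶜ).eval β :=
    hβ.eval_pos_of_ne_univ hG.preconnected (Set.compl_ne_univ.2 (Set.singleton_nonempty v))
  refine ⟨?_, hbound⟩
  rw [deriv_mul_eval_div_eval_of_root hroot hpos.ne', div_le_iff₀ hpos, div_mul_eq_mul_div]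
  exact hbound
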